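/- For λ ∈ K^×, let II¹³_λ be the evolution algebra on K² with natural basis {e₁, e₂} and products e₁² = e₁ + e₂, e₂² = λe₁, e₁e₂ = e₂e₁ = 0. Then for λ, μ ∈ K^×, the algebras II¹³_λ and II¹³_μ are isomorphic as K-algebras if and only if λ = μ. -/

import Mathlib

/-!
An isomorphism carries the given natural basis of the source to a second basis `e` of the target
with the same multiplication table, so it suffices to compare two such bases `e` and `f` of one
algebra. With `e₁ = a f₁ + b f₂` and `e₂ = c f₁ + d f₂`, comparing coordinates in `e₁ e₂ = 0` and
`e₂² = λ e₁` gives `a c = 0` and `b c² = 0`; hence `c` is annihilated by the determinant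
`a d - c b`, a unit, and vanishes. Now `a` and `d` are units, the other relations force `a = 1`,
`b + d = 1` and `b μ = 0`, and `λ = d² μ = μ`.
-/

open Module

/-- A natural basis of an evolution algebra: distinct basis vectors have product zero. -/
def IsNaturalBasis {ι R A : Type*} [Semiring R] [NonUnitalNonAssocSemiring A] [Module R A]
    (e : Basis ι R A) : Prop :=
  ∀ i j, i ≠ j → e i * e j = 0

/-- A natural basis with the multiplication table of `II¹³_lam`; the paper's `e₁` and `e₂` are
`e 0` and `e 1`. -/
structure IsII13Basis {R A : Type*} [Semiring R] [NonUnitalNonAssocSemiring A] [Module R A]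
    (lam : R) (e : Basis (Fin 2) R A) : Prop where
  isNaturalBasis : IsNaturalBasis e
  zero_mul_zero : e 0 * e 0 = e 0 + e 1
  one_mul_one : e 1 * e 1 = lam • e 0

section CommSemiring

variable {ι R A B : Type*} [CommSemiring R]
  [NonUnitalNonAssocSemiring A] [Module R A] [SMulCommClass R A A] [IsScalarTower R A A]
  [NonUnitalNonAssocSemiring B] [Module R B] [SMulCommClass R B B] [IsScalarTower R B B]

theorem IsNaturalBasis.mul_eq_sum [Fintype ι] {e : Basis ι R A} (he : IsNaturalBasis e)
    (x y : A) : x * y = ∑ i, (e.repr x i * e.repr y i) • (e i * e i) := by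
  calc
    x * y = ∑ i, ∑ j, (e.repr x i * e.repr y j) • (e i * e j) := by
      conv_lhs => rw [← e.sum_repr x, ← e.sum_repr y, Finset.sum_mul_sum]
      simp only [smul_mul_smul_comm]
    _ = ∑ i, (e.repr x i * e.repr y i) • (e i * e i) := by
      refine Finset.sum_congr rfl fun i _ => Fintype.sum_eq_single i fun j hij => ?_
      rw [he i j hij.symm, smul_zero]

theorem map_mul_of_map_mul_basis (e : Basis ι R A) (φ : A →ₗ[R] B)
    (h : ∀ i j, φ (e i * e j) = φ (e i) * φ (e j)) (x y : A) : φ (x * y) = φ x * φ y :=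
  LinearMap.congr_fun₂ (LinearMap.ext_basis e e
    (B := (LinearMap.mul R A).compr₂ φ) (B' := (LinearMap.mul R B).compl₁₂ φ φ) h) x y

theorem IsNaturalBasis.equiv_mul {e : Basis ι R A} {f : Basis ι R B}
    (he : IsNaturalBasis e) (hf : IsNaturalBasis f)
    (hsq : ∀ i, e.equiv f (Equiv.refl ι) (e i * e i) = f i * f i) (x y : A) :
    e.equiv f (Equiv.refl ι) (x * y) =
      e.equiv f (Equiv.refl ι) x * e.equiv f (Equiv.refl ι) y := by
  refine map_mul_of_map_mul_basis e (e.equiv f (Equiv.refl ι)).toLinearMap (fun i j => ?_) x y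
  simp only [LinearEquiv.coe_coe, Basis.equiv_apply, Equiv.refl_apply]
  obtain rfl | hij := eq_or_ne i j
  · exact hsq i
  · rw [he i j hij, hf i j hij, map_zero]

end CommSemiring

theorem isUnit_repr_det_fin_two {R M : Type*} [CommRing R] [AddCommGroup M] [Module R M]
    (e f : Basis (Fin 2) R M) :
    IsUnit (f.repr (e 0) 0 * f.repr (e 1) 1 - f.repr (e 1) 0 * f.repr (e 0) 1) := by
  simpa only [Basis.det_apply, Matrix.det_fin_two, Basis.toMatrix_apply] using f.isUnit_det e

namespace IsII13Basis

section CommSemiring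

variable {R A B : Type*} [CommSemiring R] {lam : R}
  [NonUnitalNonAssocSemiring A] [Module R A] [SMulCommClass R A A] [IsScalarTower R A A]
  [NonUnitalNonAssocSemiring B] [Module R B] [SMulCommClass R B B] [IsScalarTower R B B]
  {e : Basis (Fin 2) R A} {f : Basis (Fin 2) R B}

theorem mul_eq (he : IsII13Basis lam e) (x y : A) :
    x * y = (e.repr x 0 * e.repr y 0 + e.repr x 1 * e.repr y 1 * lam) • e 0 +
      (e.repr x 0 * e.repr y 0) • e 1 := by
  rw [he.isNaturalBasis.mul_eq_sum, Fin.sum_univ_two, he.zero_mul_zero, he.one_mul_one]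
  module

theorem repr_mul_zero (he : IsII13Basis lam e) (x y : A) :
    e.repr (x * y) 0 = e.repr x 0 * e.repr y 0 + e.repr x 1 * e.repr y 1 * lam := by
  simp [he.mul_eq x y]

theorem repr_mul_one (he : IsII13Basis lam e) (x y : A) :
    e.repr (x * y) 1 = e.repr x 0 * e.repr y 0 := by
  simp [he.mul_eq x y]

theorem equiv_mul (he : IsII13Basis lam e) (hf : IsII13Basis lam f) (x y : A) :
    e.equiv f (Equiv.refl _) (x * y) = e.equiv f (Equiv.refl _) x * e.equiv f (Equiv.refl _) y := by
  refine he.isNaturalBasis.equiv_mul hf.isNaturalBasis (Fin.forall_fin_two.mpr ⟨?_, ?_⟩) x y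
  · simp [he.zero_mul_zero, hf.zero_mul_zero]
  · simp [he.one_mul_one, hf.one_mul_one]

end CommSemiring

theorem map {R A B : Type*} [Semiring R] {lam : R}
    [NonUnitalNonAssocSemiring A] [Module R A] [NonUnitalNonAssocSemiring B] [Module R B]
    {e : Basis (Fin 2) R A} (he : IsII13Basis lam e) (φ : A ≃ₗ[R] B)
    (hφ : ∀ x y, φ (x * y) = φ x * φ y) : IsII13Basis lam (e.map φ) where
  isNaturalBasis i j hij := by
    rw [e.map_apply, e.map_apply, ← hφ, he.isNaturalBasis i j hij, map_zero]
  zero_mul_zero := by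
    rw [e.map_apply, e.map_apply, ← hφ, he.zero_mul_zero, map_add]
  one_mul_one := by
    rw [e.map_apply, e.map_apply, ← hφ, he.one_mul_one, map_smul]

section CommRing

variable {R A : Type*} [CommRing R] {lam mu : R}
  [NonUnitalNonAssocRing A] [Module R A] [SMulCommClass R A A] [IsScalarTower R A A]
  {e f : Basis (Fin 2) R A}

theorem repr_one_zero_eq_zero (he : IsII13Basis lam e) (hf : IsII13Basis mu f) :
    f.repr (e 1) 0 = 0 := by
  have hac : f.repr (e 0) 0 * f.repr (e 1) 0 = 0 := by
    rw [← hf.repr_mul_one, he.isNaturalBasis 0 1 zero_ne_one]; simp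
  have hbd : f.repr (e 0) 1 * f.repr (e 1) 1 * mu = 0 := by
    have h := hf.repr_mul_zero (e 0) (e 1)
    simpa [he.isNaturalBasis 0 1 zero_ne_one, hac] using h.symm
  have hsq_zero : lam * f.repr (e 0) 0 = f.repr (e 1) 0 ^ 2 + f.repr (e 1) 1 ^ 2 * mu := by
    simpa [he.one_mul_one, sq] using hf.repr_mul_zero (e 1) (e 1)
  have hsq_one : lam * f.repr (e 0) 1 = f.repr (e 1) 0 ^ 2 := by
    simpa [he.one_mul_one, sq] using hf.repr_mul_one (e 1) (e 1)
  have hbc : f.repr (e 0) 1 * f.repr (e 1) 0 ^ 2 = 0 := by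
    linear_combination f.repr (e 0) 0 * hsq_one - f.repr (e 0) 1 * hsq_zero -
      f.repr (e 1) 1 * hbd + f.repr (e 1) 0 * hac
  refine (isUnit_repr_det_fin_two e f).mul_right_eq_zero.mp ?_
  linear_combination f.repr (e 1) 1 * hac - hbc

theorem eq_of_isII13Basis (he : IsII13Basis lam e) (hf : IsII13Basis mu f) : lam = mu := by
  have hc := he.repr_one_zero_eq_zero hf
  obtain ⟨ha_unit, hd_unit⟩ : IsUnit (f.repr (e 0) 0) ∧ IsUnit (f.repr (e 1) 1) := by
    simpa [hc] using isUnit_repr_det_fin_two e f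
  have hb : f.repr (e 0) 1 * mu = 0 := by
    refine hd_unit.mul_right_eq_zero.mp ?_
    have h := hf.repr_mul_zero (e 0) (e 1)
    rw [he.isNaturalBasis 0 1 zero_ne_one, hc] at h
    simpa [mul_assoc, mul_left_comm] using h.symm
  have ha : f.repr (e 0) 0 = 1 := by
    have h := hf.repr_mul_zero (e 0) (e 0)
    simpa [he.zero_mul_zero, hc, mul_assoc, hb, ha_unit.mul_eq_left] using h.symm
  have hbd : f.repr (e 0) 1 + f.repr (e 1) 1 = 1 := by
    simpa [he.zero_mul_zero, ha] using hf.repr_mul_one (e 0) (e 0)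
  have hlam : lam = f.repr (e 1) 1 ^ 2 * mu := by
    simpa [he.one_mul_one, hc, ha, sq] using hf.repr_mul_zero (e 1) (e 1)
  calc
    lam = f.repr (e 1) 1 ^ 2 * mu := hlam
    _ = (1 - f.repr (e 0) 1) ^ 2 * mu := by rw [← hbd, add_sub_cancel_left]
    _ = mu := by linear_combination (f.repr (e 0) 1 - 2) * hb

end CommRing

end IsII13Basis

theorem II13_iso_iff_general {R A B : Type*} [CommRing R]
    [NonUnitalNonAssocRing A] [Module R A] [SMulCommClass R A A] [IsScalarTower R A A]
    [NonUnitalNonAssocRing B] [Module R B] [SMulCommClass R B B] [IsScalarTower R B B]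
    {lam mu : R} {e : Basis (Fin 2) R A} {f : Basis (Fin 2) R B}
    (he : IsII13Basis lam e) (hf : IsII13Basis mu f) :
    (∃ φ : A ≃ₗ[R] B, ∀ x y : A, φ (x * y) = φ x * φ y) ↔ lam = mu := by
  constructor
  · rintro ⟨φ, hφ⟩
    exact (he.map φ hφ).eq_of_isII13Basis hf
  · rintro rfl
    exact ⟨e.equiv f (Equiv.refl _), he.equiv_mul hf⟩

/-- For `λ ∈ K^×`, `II¹³_λ` is the evolution algebra with natural basis
`{e₁, e₂}` and products `e₁² = e₁ + e₂`, `e₂² = λ e₁`, `e₁e₂ = e₂e₁ = 0`.  For `λ, μ ∈ K^×`,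
`II¹³_λ ≅ II¹³_μ` as `K`-algebras iff `λ = μ`. -/
theorem II13_iso_iff {K A B : Type*} [Field K]
    [NonUnitalNonAssocCommRing A] [Module K A] [SMulCommClass K A A] [IsScalarTower K A A]
    [NonUnitalNonAssocCommRing B] [Module K B] [SMulCommClass K B B] [IsScalarTower K B B]
    (lam mu : K) (hlam : lam ≠ 0) (hmu : mu ≠ 0)
    (e : Module.Basis (Fin 2) K A) (hen : ∀ i j : Fin 2, i ≠ j → e i * e j = 0)
    (he0 : e 0 * e 0 = e 0 + e 1) (he1 : e 1 * e 1 = lam • e 0)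
    (f : Module.Basis (Fin 2) K B) (hfn : ∀ i j : Fin 2, i ≠ j → f i * f j = 0)
    (hf0 : f 0 * f 0 = f 0 + f 1) (hf1 : f 1 * f 1 = mu • f 0) :
    (∃ φ : A ≃ₗ[K] B, ∀ x y : A, φ (x * y) = φ x * φ y) ↔ lam = mu :=
  II13_iso_iff_general ⟨hen, he0, he1⟩ ⟨hfn, hf0, hf1⟩
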